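/- arXiv:2204.00580 — 2 statements merged into one kernel-verified Lean document; each statement's English description precedes it below -/
import Mathlib

section
/- For every δ > 0 and every x ≥ x* + δ one has the quantitative lower bound b₁δ(x) ≥ 2∫₀^{1/2} α(2δ sin(2πt)) · sin(2πt) dt > 0, and symmetrically, for every x ≤ x* − δ, b₁δ(x) ≤ −2∫₀^{1/2} α(2δ sin(2πt)) · sin(2πt) dt < 0. -/
open Real MeasureTheory intervalIntegral Filter

/-- First Fourier sine coefficient of `t ↦ h (x + δ sin (2π t))`. -/
noncomputable def b1 (h : ℝ → ℝ) (δ x : ℝ) : ℝ :=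
  2 * ∫ t in (0:ℝ)..1, h (x + δ * Real.sin (2 * Real.pi * t)) * Real.sin (2 * Real.pi * t)

/-!
Since `sin (2π (t + 1/2)) = -sin (2π t)`, the coefficient `b1 h δ x` is twice the integral over
`[0, 1/2]` of `(h (x + δ s) - h (x - δ s)) s`, where `s = sin (2π t) ≥ 0`. The growth condition
makes `h` injective on each side of the minimiser, so by continuity `h` is strictly monotone there
and the condition holds without absolute values. If `x - δ` lies to the right of the minimiser, the
integrand is therefore at least `α (2δ s) s`. The other side follows by reflecting `h`.
-/

/-- The lower bound for `|b1 h δ x|` when `h` is monotone or antitone on `[x - δ, x + δ]` and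
satisfies `α |y - z| ≤ |h y - h z|` there. -/
noncomputable def b1LowerBound (α : ℝ → ℝ) (δ : ℝ) : ℝ :=
  2 * ∫ t in (0 : ℝ)..(1 / 2), α (2 * δ * sin (2 * π * t)) * sin (2 * π * t)

theorem sin_two_pi_mul_pos {t : ℝ} (ht : t ∈ Set.Ioo 0 (1 / 2)) : 0 < sin (2 * π * t) :=
  sin_pos_of_pos_of_lt_pi (mul_pos two_pi_pos ht.1) (by nlinarith [ht.2, pi_pos])

theorem sin_two_pi_mul_nonneg {t : ℝ} (ht : t ∈ Set.Icc 0 (1 / 2)) : 0 ≤ sin (2 * π * t) :=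
  sin_nonneg_of_nonneg_of_le_pi (mul_nonneg two_pi_pos.le ht.1) (by nlinarith [ht.2, pi_pos])

theorem sin_two_pi_mul_add_half (t : ℝ) : sin (2 * π * (t + 1 / 2)) = -sin (2 * π * t) := by
  rw [← sin_add_pi]
  ring_nf

theorem sin_two_pi_mul_one_sub (t : ℝ) : sin (2 * π * (1 - t)) = -sin (2 * π * t) := by
  rw [← sin_two_pi_sub]
  ring_nf

theorem integral_add_self_eq_integral_add_comp_add {E : Type*} [NormedAddCommGroup E]
    [NormedSpace ℝ E] {f : ℝ → E} {T : ℝ} (hf₀ : IntervalIntegrable f volume 0 T)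
    (hf₁ : IntervalIntegrable f volume T (T + T)) :
    ∫ t in (0 : ℝ)..(T + T), f t = ∫ t in (0 : ℝ)..T, (f t + f (t + T)) := by
  have hshift : IntervalIntegrable (fun t ↦ f (t + T)) volume 0 T := by
    simpa using hf₁.comp_add_right T
  rw [integral_add hf₀ hshift, integral_comp_add_right, zero_add,
    integral_add_adjacent_intervals hf₀ hf₁]

theorem b1_eq_integral_sub {h : ℝ → ℝ} (hh : Continuous h) (δ x : ℝ) :
    b1 h δ x = 2 * ∫ t in (0 : ℝ)..(1 / 2),
      (h (x + δ * sin (2 * π * t)) - h (x - δ * sin (2 * π * t))) * sin (2 * π * t) := by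
  have hf : Continuous fun t ↦ h (x + δ * sin (2 * π * t)) * sin (2 * π * t) := by fun_prop
  rw [b1, ← add_halves (1 : ℝ), integral_add_self_eq_integral_add_comp_add
    (hf.intervalIntegrable _ _) (hf.intervalIntegrable _ _)]
  simp only [add_halves, sin_two_pi_mul_add_half, mul_neg, ← sub_eq_add_neg, sub_mul]

theorem b1_comp_neg (h : ℝ → ℝ) (δ x : ℝ) : b1 (fun y ↦ h (-y)) δ x = -b1 h δ (-x) := by
  have hreflect := integral_comp_sub_left (a := 0) (b := 1)
    (fun t ↦ h (-x + δ * sin (2 * π * t)) * sin (2 * π * t)) 1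
  simp only [sin_two_pi_mul_one_sub, mul_neg, intervalIntegral.integral_neg, sub_self,
    sub_zero] at hreflect
  simp only [b1, neg_add, ← hreflect, mul_neg, neg_neg]

theorem injOn_of_pos_le_dist {X Y : Type*} [MetricSpace X] [PseudoMetricSpace Y] {f : X → Y}
    {s : Set X} {α : ℝ → ℝ} (hα : ∀ r, 0 < r → 0 < α r)
    (hf : ∀ x ∈ s, ∀ y ∈ s, α (dist x y) ≤ dist (f x) (f y)) : Set.InjOn f s := by
  intro x hx y hy hxy
  by_contra hne
  have hpos := (hα _ (dist_pos.2 hne)).trans_le (hf x hx y hy)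
  rw [hxy, dist_self] at hpos
  exact hpos.false

theorem strictMonoOn_Ici_of_injOn_of_isMinOn {X Y : Type*} [ConditionallyCompleteLinearOrder X]
    [TopologicalSpace X] [OrderTopology X] [DenselyOrdered X] [LinearOrder Y] [TopologicalSpace Y]
    [OrderClosedTopology Y] {f : X → Y} {c : X} (hf : ContinuousOn f (Set.Ici c))
    (hinj : Set.InjOn f (Set.Ici c)) (hmin : IsMinOn f (Set.Ici c) c) :
    StrictMonoOn f (Set.Ici c) := by
  intro a ha b hb hab
  exact ContinuousOn.strictMonoOn_of_injOn_Icc hb (hmin hb) (hf.mono Set.Icc_subset_Ici_self)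
    (hinj.mono Set.Icc_subset_Ici_self) ⟨ha, hab.le⟩ ⟨hb, le_rfl⟩ hab

section LowerBound

variable {α : ℝ → ℝ} {δ : ℝ}

theorem intervalIntegrable_b1LowerBound_integrand (hα : ContinuousOn α (Set.Ici 0)) (hδ : 0 ≤ δ) :
    IntervalIntegrable (fun t ↦ α (2 * δ * sin (2 * π * t)) * sin (2 * π * t))
      volume 0 (1 / 2) := by
  have hmaps : Set.MapsTo (fun t ↦ 2 * δ * sin (2 * π * t)) (Set.Icc 0 (1 / 2)) (Set.Ici 0) :=
    fun _ ht ↦ mul_nonneg (by positivity) (sin_two_pi_mul_nonneg ht)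
  exact ((hα.comp (by fun_prop) hmaps).mul (by fun_prop)).intervalIntegrable_of_Icc (by norm_num)

theorem b1LowerBound_pos (hα : ContinuousOn α (Set.Ici 0)) (hα_pos : ∀ r, 0 < r → 0 < α r)
    (hδ : 0 < δ) : 0 < b1LowerBound α δ := by
  refine mul_pos two_pos (intervalIntegral_pos_of_pos_on
    (intervalIntegrable_b1LowerBound_integrand hα hδ.le) (fun t ht ↦ ?_) (by norm_num))
  have hsin := sin_two_pi_mul_pos ht
  exact mul_pos (hα_pos _ (by positivity)) hsin

theorem b1LowerBound_le_b1_of_le_sub {h : ℝ → ℝ} {x : ℝ} (hh : Continuous h)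
    (hα : ContinuousOn α (Set.Ici 0)) (hδ : 0 ≤ δ)
    (hgrow : ∀ r ∈ Set.Icc 0 δ, α (2 * r) ≤ h (x + r) - h (x - r)) :
    b1LowerBound α δ ≤ b1 h δ x := by
  rw [b1_eq_integral_sub hh, b1LowerBound]
  gcongr
  refine integral_mono_on (by norm_num) (intervalIntegrable_b1LowerBound_integrand hα hδ)
    (Continuous.intervalIntegrable (by fun_prop) _ _) fun t ht ↦ ?_
  have hsin := sin_two_pi_mul_nonneg ht
  have hr : δ * sin (2 * π * t) ∈ Set.Icc 0 δ :=
    ⟨mul_nonneg hδ hsin, mul_le_of_le_one_right hδ (sin_le_one _)⟩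
  rw [mul_assoc 2 δ]
  exact mul_le_mul_of_nonneg_right (hgrow _ hr) hsin

variable {h : ℝ → ℝ} {c x : ℝ}

theorem b1LowerBound_le_b1 (hh : Continuous h) (hmin : IsMinOn h (Set.Ici c) c)
    (hα : ContinuousOn α (Set.Ici 0)) (hα_pos : ∀ r, 0 < r → 0 < α r)
    (hlb : ∀ y ∈ Set.Ici c, ∀ z ∈ Set.Ici c, α (dist y z) ≤ dist (h y) (h z))
    (hδ : 0 ≤ δ) (hx : c + δ ≤ x) : b1LowerBound α δ ≤ b1 h δ x := by
  have hmono : StrictMonoOn h (Set.Ici c) :=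
    strictMonoOn_Ici_of_injOn_of_isMinOn hh.continuousOn (injOn_of_pos_le_dist hα_pos hlb) hmin
  refine b1LowerBound_le_b1_of_le_sub hh hα hδ fun r hr ↦ ?_
  have hleft : x - r ∈ Set.Ici c := Set.mem_Ici.2 (by linarith [hr.2])
  have hle : x - r ≤ x + r := by linarith [hr.1]
  have hright : x + r ∈ Set.Ici c := hleft.trans hle
  calc α (2 * r) = α (dist (x + r) (x - r)) := by
        rw [Real.dist_eq, abs_of_nonneg (sub_nonneg.2 hle)]
        ring_nf
    _ ≤ dist (h (x + r)) (h (x - r)) := hlb _ hright _ hleft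
    _ = h (x + r) - h (x - r) :=
        abs_of_nonneg (sub_nonneg.2 (hmono.monotoneOn hleft hright hle))

theorem b1_le_neg_b1LowerBound (hh : Continuous h) (hmin : IsMinOn h (Set.Iic c) c)
    (hα : ContinuousOn α (Set.Ici 0)) (hα_pos : ∀ r, 0 < r → 0 < α r)
    (hlb : ∀ y ∈ Set.Iic c, ∀ z ∈ Set.Iic c, α (dist y z) ≤ dist (h y) (h z))
    (hδ : 0 ≤ δ) (hx : x ≤ c - δ) : b1 h δ x ≤ -b1LowerBound α δ := by
  have hmem {y : ℝ} (hy : y ∈ Set.Ici (-c)) : -y ∈ Set.Iic c := Set.mem_Iic.2 (neg_le.1 hy)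
  have hreflected : b1LowerBound α δ ≤ b1 (fun y ↦ h (-y)) δ (-x) := by
    refine b1LowerBound_le_b1 (c := -c) (by fun_prop) (fun y hy ↦ ?_) hα hα_pos
      (fun y hy z hz ↦ ?_) hδ (by linarith)
    · simpa using hmin (hmem hy)
    · simpa only [dist_neg_neg] using hlb _ (hmem hy) _ (hmem hz)
  rw [b1_comp_neg, neg_neg] at hreflected
  exact le_neg_of_le_neg hreflected

end LowerBound

theorem b1_quantitative_bound_general {h : ℝ → ℝ} (hh : Continuous h) {xstar : ℝ}
    (hmin : ∀ x, h xstar ≤ h x) {α : ℝ → ℝ} (hα : ContinuousOn α (Set.Ici 0))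
    (hα_pos : ∀ r, 0 < r → 0 < α r)
    (hlb : ∀ x₁ x₂, 0 ≤ (x₁ - xstar) * (x₂ - xstar) → α |x₂ - x₁| ≤ |h x₂ - h x₁|)
    {δ : ℝ} (hδ : 0 < δ) :
    0 < b1LowerBound α δ ∧ (∀ x, xstar + δ ≤ x → b1LowerBound α δ ≤ b1 h δ x) ∧
      ∀ x, x ≤ xstar - δ → b1 h δ x ≤ -b1LowerBound α δ := by
  refine ⟨b1LowerBound_pos hα hα_pos hδ, fun x hx ↦ ?_, fun x hx ↦ ?_⟩
  · exact b1LowerBound_le_b1 hh (fun y _ ↦ hmin y) hα hα_pos (fun y hy z hz ↦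
      hlb z y (mul_nonneg (sub_nonneg.2 hz) (sub_nonneg.2 hy))) hδ.le hx
  · exact b1_le_neg_b1LowerBound hh (fun y _ ↦ hmin y) hα hα_pos (fun y hy z hz ↦
      hlb z y (mul_nonneg_of_nonpos_of_nonpos (sub_nonpos.2 hz) (sub_nonpos.2 hy))) hδ.le hx

/-- quantitative lower bound on `b1` outside `[x* - δ, x* + δ]`. -/
theorem b1_quantitative_bound (h : ℝ → ℝ) (hsmooth : ContDiff ℝ (⊤ : ℕ∞) h)
    (xstar : ℝ) (hmin : ∀ x : ℝ, x ≠ xstar → h xstar < h x)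
    (α : ℝ → ℝ) (hα_cont : ContinuousOn α (Set.Ici 0))
    (hα_mono : StrictMonoOn α (Set.Ici 0)) (hα0 : α 0 = 0)
    (hα_top : Tendsto α atTop atTop)
    (hlb : ∀ x₁ x₂ : ℝ, (x₁ - xstar) * (x₂ - xstar) ≥ 0 → α |x₂ - x₁| ≤ |h x₂ - h x₁|)
    (δ : ℝ) (hδ : 0 < δ) :
    (0 < 2 * ∫ t in (0:ℝ)..(1/2), α (2 * δ * Real.sin (2 * Real.pi * t)) * Real.sin (2 * Real.pi * t)) ∧
    (∀ x : ℝ, xstar + δ ≤ x →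
      2 * (∫ t in (0:ℝ)..(1/2), α (2 * δ * Real.sin (2 * Real.pi * t)) * Real.sin (2 * Real.pi * t))
        ≤ b1 h δ x) ∧
    (∀ x : ℝ, x ≤ xstar - δ →
      b1 h δ x ≤
        -(2 * ∫ t in (0:ℝ)..(1/2), α (2 * δ * Real.sin (2 * Real.pi * t)) * Real.sin (2 * Real.pi * t))) := by
  have hα_pos (r : ℝ) (hr : 0 < r) : 0 < α r := hα0 ▸ hα_mono Set.self_mem_Ici hr.le hr
  exact b1_quantitative_bound_general hsmooth.continuous
    (fun x ↦ (eq_or_ne x xstar).elim (fun hx ↦ hx ▸ le_rfl) fun hx ↦ (hmin x hx).le)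
    hα_cont hα_pos hlb hδ
end

section
/- For every δ > 0 there exists a point x̂ in the open interval (x* − δ, x* + δ) with b₁δ(x̂) = 0; that is, the average system ẋₐ = −(γ/2)·b₁δ(xₐ) has an equilibrium inside (x* − δ, x* + δ). -/
open Real MeasureTheory intervalIntegral Filter

/-!
The comparison function makes `h` injective on each side of `x*`; being continuous with a minimum
at `x*`, it is then strictly decreasing on the left and strictly increasing on the right. The sine
has mean zero over a period, so `b1 h δ x` is twice the integral of
`(h (x + δ s) - h x) * s`, `s = sin (2π t)`, whose integrand is nonnegative when `h` is increasing
on `[x - δ, x + δ]` and nonpositive when `h` is decreasing there. Hence `b1 h δ` is negative at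
`x* - δ` and positive at `x* + δ`, and the intermediate value theorem gives a zero in between.
-/

open Set

section SineCoefficient

variable {h : ℝ → ℝ} {δ x : ℝ}

theorem add_mul_sin_mem_Icc (hδ : 0 ≤ δ) (x θ : ℝ) : x + δ * sin θ ∈ Icc (x - δ) (x + δ) := by
  constructor <;> nlinarith [sin_le_one θ, neg_one_le_sin θ]

theorem continuous_comp_add_mul_sin (hδ : 0 ≤ δ) (hc : ContinuousOn h (Icc (x - δ) (x + δ))) :
    Continuous fun t ↦ h (x + δ * sin (2 * π * t)) :=
  hc.comp_continuous (by fun_prop) fun _ ↦ add_mul_sin_mem_Icc hδ x _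

theorem integral_sin_two_pi_mul : ∫ t in (0 : ℝ)..1, sin (2 * π * t) = 0 := by
  simp [integral_comp_mul_left sin two_pi_pos.ne']

theorem b1_neg (h : ℝ → ℝ) (δ x : ℝ) : b1 (-h) δ x = -b1 h δ x := by
  simp [b1]

theorem b1_sub_const (hδ : 0 ≤ δ) (hc : ContinuousOn h (Icc (x - δ) (x + δ))) (c : ℝ) :
    b1 (fun y ↦ h y - c) δ x = b1 h δ x := by
  have hint : IntervalIntegrable
      (fun t ↦ h (x + δ * sin (2 * π * t)) * sin (2 * π * t)) volume 0 1 :=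
    ((continuous_comp_add_mul_sin hδ hc).mul (by fun_prop)).intervalIntegrable _ _
  have hint_const : IntervalIntegrable (fun t ↦ c * sin (2 * π * t)) volume 0 1 :=
    Continuous.intervalIntegrable (by fun_prop) _ _
  simp only [b1, sub_mul, intervalIntegral.integral_sub hint hint_const,
    intervalIntegral.integral_const_mul, integral_sin_two_pi_mul, mul_zero, sub_zero]

theorem b1_pos_of_monotoneOn (hδ : 0 ≤ δ) (hc : ContinuousOn h (Icc (x - δ) (x + δ)))
    (hmono : MonotoneOn h (Icc (x - δ) (x + δ))) (hlt : h (x - δ) < h (x + δ)) :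
    0 < b1 h δ x := by
  have hx : x ∈ Icc (x - δ) (x + δ) := ⟨by linarith, by linarith⟩
  have hnonneg (t : ℝ) : 0 ≤ (h (x + δ * sin (2 * π * t)) - h x) * sin (2 * π * t) := by
    have hy := add_mul_sin_mem_Icc hδ x (2 * π * t)
    rcases le_total 0 (sin (2 * π * t)) with hs | hs
    · exact mul_nonneg (sub_nonneg.2 (hmono hx hy (by nlinarith))) hs
    · exact mul_nonneg_of_nonpos_of_nonpos (sub_nonpos.2 (hmono hy hx (by nlinarith))) hs
  have hpos : ∃ t ∈ Icc (0 : ℝ) 1, 0 < (h (x + δ * sin (2 * π * t)) - h x) * sin (2 * π * t) := by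
    -- `t = 1/4` and `t = 3/4` reach the two endpoints `x + δ` and `x - δ`.
    have hsin_quarter : sin (2 * π * (1 / 4)) = 1 := by
      rw [show 2 * π * (1 / 4) = π / 2 by ring, sin_pi_div_two]
    have hsin_three_quarters : sin (2 * π * (3 / 4)) = -1 := by
      rw [show 2 * π * (3 / 4) = π / 2 + π by ring, sin_add_pi, sin_pi_div_two]
    rcases lt_or_ge (h x) (h (x + δ)) with hright | hright
    · exact ⟨1 / 4, by norm_num, by rw [hsin_quarter, mul_one, mul_one]; linarith⟩
    · have hleft : h (x + δ * -1) < h x := by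
        simpa [← sub_eq_add_neg] using hlt.trans_le hright
      exact ⟨3 / 4, by norm_num, by rw [hsin_three_quarters]; linarith⟩
  rw [← b1_sub_const hδ hc (h x)]
  exact mul_pos two_pos (intervalIntegral.integral_pos one_pos
    (((continuous_comp_add_mul_sin hδ hc).sub continuous_const).mul (by fun_prop)).continuousOn
    (fun t _ ↦ hnonneg t) hpos)

theorem b1_lt_zero_of_antitoneOn (hδ : 0 ≤ δ) (hc : ContinuousOn h (Icc (x - δ) (x + δ)))
    (hanti : AntitoneOn h (Icc (x - δ) (x + δ))) (hlt : h (x + δ) < h (x - δ)) :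
    b1 h δ x < 0 := by
  have hpos := b1_pos_of_monotoneOn hδ hc.neg hanti.neg (neg_lt_neg hlt)
  rwa [b1_neg, neg_pos] at hpos

theorem continuousOn_b1 {a b : ℝ} (hδ : 0 ≤ δ) (hc : ContinuousOn h (Icc (a - δ) (b + δ))) :
    ContinuousOn (b1 h δ) (Icc a b) := by
  have hcomp : Continuous fun p : Icc a b × ℝ ↦ h (p.1 + δ * sin (2 * π * p.2)) :=
    hc.comp_continuous (by fun_prop) fun p ↦
      Icc_subset_Icc (sub_le_sub_right p.1.2.1 δ) (add_le_add_left p.1.2.2 δ)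
        (add_mul_sin_mem_Icc hδ p.1 _)
  refine continuousOn_iff_continuous_domRestrict.2 (continuous_const.mul ?_)
  exact continuous_parametric_intervalIntegral_of_continuous' (hcomp.mul (by fun_prop)) _ _

theorem b1_has_zero_general {c : ℝ} (hδ : 0 < δ)
    (hc : ContinuousOn h (Icc (c - 2 * δ) (c + 2 * δ)))
    (hanti : AntitoneOn h (Icc (c - 2 * δ) c)) (hleft : h c < h (c - 2 * δ))
    (hmono : MonotoneOn h (Icc c (c + 2 * δ))) (hright : h c < h (c + 2 * δ)) :
    ∃ x ∈ Ioo (c - δ) (c + δ), b1 h δ x = 0 := by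
  have hsub : c - δ - δ = c - 2 * δ := by ring
  have hadd : c + δ + δ = c + 2 * δ := by ring
  have hneg : b1 h δ (c - δ) < 0 := by
    apply b1_lt_zero_of_antitoneOn hδ.le <;> rw [hsub, sub_add_cancel]
    exacts [hc.mono (Icc_subset_Icc_right (by linarith)), hanti, hleft]
  have hpos : 0 < b1 h δ (c + δ) := by
    apply b1_pos_of_monotoneOn hδ.le <;> rw [hadd, add_sub_cancel_right]
    exacts [hc.mono (Icc_subset_Icc_left (by linarith)), hmono, hright]
  have hcont : ContinuousOn (b1 h δ) (Icc (c - δ) (c + δ)) :=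
    continuousOn_b1 hδ.le (by rwa [hsub, hadd])
  exact intermediate_value_Ioo (by linarith) hcont ⟨hneg, hpos⟩

end SineCoefficient

theorem injOn_of_le_dist {X Y : Type*} [MetricSpace X] [PseudoMetricSpace Y] {f : X → Y}
    {s : Set X} {α : ℝ → ℝ} (hα : ∀ r, 0 < r → 0 < α r)
    (hf : ∀ x ∈ s, ∀ y ∈ s, α (dist x y) ≤ dist (f x) (f y)) : InjOn f s := by
  intro x hx y hy hxy
  by_contra hne
  exact ((hα _ (dist_pos.2 hne)).trans_le (hf x hx y hy)).ne' (by rw [hxy, dist_self])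

section InjectiveWithMinimum

variable {X Y : Type*} [ConditionallyCompleteLinearOrder X] [DenselyOrdered X]
  [TopologicalSpace X] [OrderTopology X] [LinearOrder Y] [TopologicalSpace Y]
  [OrderClosedTopology Y] {f : X → Y} {c : X}

theorem strictMonoOn_Ici_of_isMinOn_of_injOn (hc : ContinuousOn f (Ici c))
    (hmin : IsMinOn f (Ici c) c) (hinj : InjOn f (Ici c)) : StrictMonoOn f (Ici c) :=
  fun _ hx _ hy hxy ↦ (hc.mono Icc_subset_Ici_self).strictMonoOn_of_injOn_Icc hy (hmin hy)
    (hinj.mono Icc_subset_Ici_self) ⟨hx, hxy.le⟩ (right_mem_Icc.2 hy) hxy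

theorem strictAntiOn_Iic_of_isMinOn_of_injOn (hc : ContinuousOn f (Iic c))
    (hmin : IsMinOn f (Iic c) c) (hinj : InjOn f (Iic c)) : StrictAntiOn f (Iic c) :=
  fun _ hx _ hy hxy ↦ (hc.mono Icc_subset_Iic_self).strictAntiOn_of_injOn_Icc hx (hmin hx)
    (hinj.mono Icc_subset_Iic_self) (left_mem_Icc.2 hx) ⟨hxy.le, hy⟩ hxy

end InjectiveWithMinimum

theorem strictAntiOn_Iic_and_strictMonoOn_Ici_of_le_abs_sub {h α : ℝ → ℝ} {c : ℝ}
    (hc : Continuous h) (hmin : ∀ x, h c ≤ h x) (hα : ∀ r, 0 < r → 0 < α r)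
    (hlb : ∀ x y, 0 ≤ (x - c) * (y - c) → α |y - x| ≤ |h y - h x|) :
    StrictAntiOn h (Iic c) ∧ StrictMonoOn h (Ici c) := by
  have hinj {s : Set ℝ} (hs : ∀ x ∈ s, ∀ y ∈ s, 0 ≤ (x - c) * (y - c)) : InjOn h s :=
    injOn_of_le_dist hα fun x hx y hy ↦ hlb y x (hs y hy x hx)
  constructor
  · refine strictAntiOn_Iic_of_isMinOn_of_injOn hc.continuousOn (fun x _ ↦ hmin x) (hinj ?_)
    exact fun x hx y hy ↦ mul_nonneg_of_nonpos_of_nonpos (sub_nonpos.2 hx) (sub_nonpos.2 hy)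
  · refine strictMonoOn_Ici_of_isMinOn_of_injOn hc.continuousOn (fun x _ ↦ hmin x) (hinj ?_)
    exact fun x hx y hy ↦ mul_nonneg (sub_nonneg.2 hx) (sub_nonneg.2 hy)

/-- existence of an equilibrium of the average system in `(x* - δ, x* + δ)`. -/
theorem b1_has_zero (h : ℝ → ℝ) (hsmooth : ContDiff ℝ (⊤ : ℕ∞) h)
    (xstar : ℝ) (hmin : ∀ x : ℝ, x ≠ xstar → h xstar < h x)
    (α : ℝ → ℝ) (hα_cont : ContinuousOn α (Set.Ici 0))
    (hα_mono : StrictMonoOn α (Set.Ici 0)) (hα0 : α 0 = 0)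
    (hα_top : Tendsto α atTop atTop)
    (hlb : ∀ x₁ x₂ : ℝ, (x₁ - xstar) * (x₂ - xstar) ≥ 0 → α |x₂ - x₁| ≤ |h x₂ - h x₁|)
    (δ : ℝ) (hδ : 0 < δ) :
    ∃ xhat ∈ Set.Ioo (xstar - δ) (xstar + δ), b1 h δ xhat = 0 := by
  have hα_pos (r : ℝ) (hr : 0 < r) : 0 < α r := hα0 ▸ hα_mono self_mem_Ici hr.le hr
  have hmin_le (x : ℝ) : h xstar ≤ h x := by
    rcases eq_or_ne x xstar with rfl | hx
    exacts [le_rfl, (hmin x hx).le]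
  obtain ⟨hanti, hmono⟩ := strictAntiOn_Iic_and_strictMonoOn_Ici_of_le_abs_sub
    hsmooth.continuous hmin_le hα_pos hlb
  exact b1_has_zero_general hδ hsmooth.continuous.continuousOn
    (hanti.antitoneOn.mono Icc_subset_Iic_self) (hmin _ (by linarith))
    (hmono.monotoneOn.mono Icc_subset_Ici_self) (hmin _ (by linarith))
end
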